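/- arXiv:2103.06635 — 2 statements merged into one kernel-verified Lean document; each statement's English description precedes it below -/
import Mathlib

section
/- Let (d_n)_{n≥0} count Dyck paths of semilength n whose peaks all occur at odd heights (equivalently, avoiding all even peak heights). Then the sequence of Hankel determinants (H_1, H_2, H_3, ...) of (d_n) is periodic with period 6, equal to the repetition of (1, 0, -1, -1, 0, 1). -/
/-- Height of a lattice path (given by up/down indicators `p`) after `k` steps. -/
def pathHeight (p : ℕ → Bool) (k : ℕ) : ℤ :=
  ∑ i ∈ Finset.range k, (if p i then (1 : ℤ) else -1)

/-- The number of Dyck paths of semilength `n` (paths of `2n` steps `(1,1)`/`(1,-1)`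
from `(0,0)` to `(2n,0)` staying weakly above the x-axis) none of whose peaks has
height in the set `S`.  A peak is an up-step immediately followed by a down-step;
its height is the y-coordinate of its apex. -/
noncomputable def dyckCount (S : ℕ → Prop) (n : ℕ) : ℕ :=
  Nat.card {p : ℕ → Bool //
    (∀ i, 2 * n ≤ i → p i = false) ∧
    (∀ k, k ≤ 2 * n → 0 ≤ pathHeight p k) ∧
    pathHeight p (2 * n) = 0 ∧
    (∀ i, i + 1 < 2 * n → p i = true → p (i + 1) = false →
      ¬ S (pathHeight p (i + 1)).toNat) }

/-!
Cut an odd-peak Dyck path of semilength `n + 1` into its first step, `n` pairs of steps, and its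
last step. Each pair starts at an odd height, so the pair up-down is forbidden, while any peak
straddling two pairs has odd height and is harmless. Reading up-up, down-up, down-down as up, level,
down identifies the path with a Motzkin path of length `n`, so the number `d (n + 1)` of these paths
is `(J ^ n)₀₀`, where `J` is the infinite matrix with ones on its three central diagonals.

Let `B` be the unitriangular matrix `1 ⊕ L`, where row `n` of `L` is row `0` of `J ^ n`. Symmetry of
`J` shows that the Hankel matrix of `d` is `B * J * Bᵀ`, so its determinant is that of the truncated
tridiagonal matrix, which satisfies `t (n + 2) = t (n + 1) - t n` and is therefore `6`-periodic.
-/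

open Finset Matrix

/-- The sequence `a, f 0, f 1, …`. It serves both to put a first step in front of a lattice path
and to border a vector indexed by `ℕ`. -/
def prepend {α : Type*} (a : α) (f : ℕ → α) : ℕ → α
  | 0 => a
  | i + 1 => f i

section Prepend

variable {α : Type*}

@[simp]
lemma prepend_zero (a : α) (f : ℕ → α) : prepend a f 0 = a := rfl

@[simp]
lemma prepend_succ (a : α) (f : ℕ → α) (i : ℕ) : prepend a f (i + 1) = f i := rfl

lemma prepend_apply_zero_tail (f : ℕ → α) : prepend (f 0) (fun i => f (i + 1)) = f := by
  ext (_ | i) <;> rfl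

lemma prepend_injective (a : α) : Function.Injective (prepend a) := fun f g h => by
  ext i
  simpa using congrFun h (i + 1)

lemma ncard_eq_ncard_preimage_prepend_add {A : Set (ℕ → Bool)} (hA : A.Finite) :
    A.ncard = (prepend true ⁻¹' A).ncard + (prepend false ⁻¹' A).ncard := by
  have hsplit :
      A = prepend true '' (prepend true ⁻¹' A) ∪ prepend false '' (prepend false ⁻¹' A) := by
    ext p
    simp only [Set.image_preimage_eq_inter_range, ← Set.inter_union_distrib_left, Set.mem_inter_iff,
      Set.mem_union, Set.mem_range, iff_self_and]
    intro _
    cases h : p 0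
    · exact .inr ⟨_, h ▸ prepend_apply_zero_tail p⟩
    · exact .inl ⟨_, h ▸ prepend_apply_zero_tail p⟩
  have hdisj : Disjoint (prepend true '' (prepend true ⁻¹' A))
      (prepend false '' (prepend false ⁻¹' A)) := by
    rw [Set.disjoint_left]
    rintro _ ⟨p, _, rfl⟩ ⟨q, _, hq⟩
    simpa using congrFun hq 0
  conv_lhs => rw [hsplit]
  rw [Set.ncard_union_eq hdisj (hA.subset (Set.image_preimage_subset _ _))
      (hA.subset (Set.image_preimage_subset _ _)),
    Set.ncard_image_of_injective _ (prepend_injective _),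
    Set.ncard_image_of_injective _ (prepend_injective _)]

end Prepend

section LatticePaths

/-- The lattice paths of `N` steps from height `H` to height `0` that stay weakly above height `0`
and have no peak with height in `S`. As in `dyckCount`, a path is padded with down-steps after its
`N` steps; the set is empty when `H < 0`. -/
def latticePaths (S : ℕ → Prop) (N : ℕ) (H : ℤ) : Set (ℕ → Bool) :=
  {p | (∀ i, N ≤ i → p i = false) ∧
    (∀ k, k ≤ N → 0 ≤ H + pathHeight p k) ∧
    H + pathHeight p N = 0 ∧
    (∀ i, i + 1 < N → p i = true → p (i + 1) = false →
      ¬ S (H + pathHeight p (i + 1)).toNat)}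

variable {S : ℕ → Prop} {N : ℕ} {H : ℤ}

lemma dyckCount_eq_ncard_latticePaths (S : ℕ → Prop) (n : ℕ) :
    dyckCount S n = (latticePaths S (2 * n) 0).ncard := by
  simp only [latticePaths, zero_add]
  rfl

lemma pathHeight_zero (p : ℕ → Bool) : pathHeight p 0 = 0 := sum_range_zero _

lemma pathHeight_prepend_succ (b : Bool) (p : ℕ → Bool) (k : ℕ) :
    pathHeight (prepend b p) (k + 1) = (if b then 1 else -1) + pathHeight p k := by
  rw [pathHeight, sum_range_succ', add_comm]
  rfl

lemma latticePaths_of_neg (hH : H < 0) : latticePaths S N H = ∅ := by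
  refine Set.eq_empty_of_forall_notMem fun p hp => ?_
  have := hp.2.1 0 (Nat.zero_le N)
  rw [pathHeight_zero] at this
  lia

lemma finite_latticePaths (S : ℕ → Prop) (N : ℕ) (H : ℤ) : (latticePaths S N H).Finite := by
  refine Set.Finite.of_finite_image (f := fun p (i : Fin N) => p i) (Set.toFinite _) ?_
  intro p hp q hq hpq
  funext i
  obtain hi | hi := lt_or_ge i N
  · exact congrFun hpq ⟨i, hi⟩
  · rw [hp.1 i hi, hq.1 i hi]

lemma ncard_latticePaths_zero (S : ℕ → Prop) (H : ℤ) :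
    (latticePaths S 0 H).ncard = if H = 0 then 1 else 0 := by
  split_ifs with hH
  · rw [Set.ncard_eq_one]
    refine ⟨fun _ => false, Set.ext fun p => ⟨fun hp => funext fun i => hp.1 i i.zero_le, ?_⟩⟩
    rintro rfl
    simp [latticePaths, pathHeight_zero, hH]
  · rw [Set.ncard_eq_zero (finite_latticePaths S 0 H)]
    refine Set.eq_empty_of_forall_notMem fun p hp => hH ?_
    simpa [pathHeight_zero] using hp.2.2.1

lemma prepend_mem_latticePaths {b : Bool} {p : ℕ → Bool} :
    prepend b p ∈ latticePaths S (N + 1) H ↔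
      0 ≤ H ∧ p ∈ latticePaths S N (H + if b then 1 else -1) ∧
        (0 < N → b = true → p 0 = false → ¬ S (H + 1).toNat) := by
  constructor
  · rintro ⟨hpad, hnonneg, hend, hpeak⟩
    refine ⟨by simpa [pathHeight_zero] using hnonneg 0 (by lia), ⟨?_, ?_, ?_, ?_⟩, ?_⟩
    · exact fun i hi => hpad (i + 1) (by lia)
    · intro k hk
      simpa only [pathHeight_prepend_succ, ← add_assoc] using hnonneg (k + 1) (by lia)
    · simpa only [pathHeight_prepend_succ, ← add_assoc] using hend
    · intro i hi hup hdown
      simpa only [pathHeight_prepend_succ, ← add_assoc] using hpeak (i + 1) (by lia) hup hdown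
    · rintro hN rfl hdown
      simpa [pathHeight_prepend_succ, pathHeight_zero] using hpeak 0 (by lia) rfl hdown
  · rintro ⟨hH, ⟨hpad, hnonneg, hend, hpeak⟩, hfirst⟩
    refine ⟨?_, ?_, ?_, ?_⟩
    · rintro (_ | i) hi
      · lia
      · exact hpad i (by lia)
    · rintro (_ | k) hk
      · simpa [pathHeight_zero] using hH
      · simpa only [pathHeight_prepend_succ, ← add_assoc] using hnonneg k (by lia)
    · simpa only [pathHeight_prepend_succ, ← add_assoc] using hend
    · rintro (_ | i) hi hup hdown
      · obtain rfl : b = true := hup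
        simpa [pathHeight_prepend_succ, pathHeight_zero] using hfirst (by lia) rfl hdown
      · simpa only [pathHeight_prepend_succ, ← add_assoc] using hpeak i (by lia) hup hdown

lemma preimage_prepend_false_latticePaths (hH : 0 ≤ H) :
    prepend false ⁻¹' latticePaths S (N + 1) H = latticePaths S N (H - 1) := by
  ext p
  simp [prepend_mem_latticePaths, hH, sub_eq_add_neg]

lemma preimage_prepend_true_latticePaths (hH : 0 ≤ H) (hS : 0 < N → ¬ S (H + 1).toNat) :
    prepend true ⁻¹' latticePaths S (N + 1) H = latticePaths S N (H + 1) := by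
  ext p
  simp only [Set.mem_preimage, prepend_mem_latticePaths, hH, if_true, true_and,
    and_iff_left_iff_imp]
  exact fun _ hN _ _ => hS hN

lemma ncard_latticePaths_succ (hH : 0 ≤ H) (hS : 0 < N → ¬ S (H + 1).toNat) :
    (latticePaths S (N + 1) H).ncard =
      (latticePaths S N (H + 1)).ncard + (latticePaths S N (H - 1)).ncard := by
  rw [ncard_eq_ncard_preimage_prepend_add (finite_latticePaths _ _ _),
    preimage_prepend_true_latticePaths hH hS, preimage_prepend_false_latticePaths hH]

lemma ncard_latticePaths_succ_succ (hH : 0 ≤ H) (hS : S (H + 1).toNat) (hS' : ¬ S (H + 2).toNat) :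
    (latticePaths S (N + 2) H).ncard =
      (latticePaths S N (H + 2)).ncard + (latticePaths S (N + 1) (H - 1)).ncard := by
  have htwo : H + 1 + 1 = H + 2 := by ring
  have hup_up : prepend true ⁻¹' (prepend true ⁻¹' latticePaths S (N + 2) H) =
      latticePaths S N (H + 2) := by
    rw [← htwo, ← preimage_prepend_true_latticePaths (by lia) fun _ => htwo ▸ hS']
    ext p
    simp [prepend_mem_latticePaths (b := true) (p := prepend true p) (N := N + 1), hH]
  have hup_down : prepend false ⁻¹' (prepend true ⁻¹' latticePaths S (N + 2) H) = ∅ := by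
    refine Set.eq_empty_of_forall_notMem fun p hp => ?_
    exact (prepend_mem_latticePaths.mp hp).2.2 N.succ_pos rfl rfl hS
  rw [ncard_eq_ncard_preimage_prepend_add (finite_latticePaths _ _ _),
    preimage_prepend_false_latticePaths hH,
    ncard_eq_ncard_preimage_prepend_add
      ((finite_latticePaths _ _ _).preimage (prepend_injective _).injOn),
    hup_up, hup_down, Set.ncard_empty, add_zero]

lemma ncard_latticePaths_even_add_two (N k : ℕ) :
    (latticePaths Even (N + 2) (2 * k + 1)).ncard =
      (latticePaths Even N (2 * (k + 1 : ℕ) + 1)).ncard +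
        (latticePaths Even N (2 * k + 1)).ncard + (latticePaths Even N (2 * k - 1)).ncard := by
  have hforbidden : Even (2 * (k : ℤ) + 1 + 1).toNat := ⟨k + 1, by lia⟩
  have hallowed : ¬ Even (2 * (k : ℤ) + 1).toNat := Nat.not_even_iff_odd.mpr ⟨k, by lia⟩
  have hallowed_up : ¬ Even (2 * (k : ℤ) + 1 + 2).toNat :=
    Nat.not_even_iff_odd.mpr ⟨k + 1, by lia⟩
  have hup : 2 * ((k + 1 : ℕ) : ℤ) + 1 = 2 * k + 1 + 2 := by
    push_cast
    ring
  rw [hup, ncard_latticePaths_succ_succ (by lia) hforbidden hallowed_up, add_sub_cancel_right,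
    ncard_latticePaths_succ (by lia) fun _ => hallowed, ← add_assoc (Set.ncard _)]

end LatticePaths

section JacobiOperator

variable {R : Type*} [CommRing R]

/-- The tridiagonal (Jacobi) operator on sequences with diagonal `b` and ones on both off-diagonals.
It is the transfer operator of Motzkin paths whose level steps at height `k` have weight `b k`. -/
def jacobiOperator (b : ℕ → R) : Module.End R (ℕ → R) where
  toFun v
    | 0 => b 0 * v 0 + v 1
    | k + 1 => v k + b (k + 1) * v (k + 1) + v (k + 2)
  map_add' u v := by
    ext (_ | k) <;> simp only [Pi.add_apply] <;> ring
  map_smul' c v := by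
    ext (_ | k) <;> simp only [Pi.smul_apply, smul_eq_mul, RingHom.id_apply] <;> ring

lemma jacobiOperator_apply_zero (b v : ℕ → R) : jacobiOperator b v 0 = b 0 * v 0 + v 1 := rfl

lemma jacobiOperator_apply_succ (b v : ℕ → R) (k : ℕ) :
    jacobiOperator b v (k + 1) = v k + b (k + 1) * v (k + 1) + v (k + 2) := rfl

lemma jacobiOperator_apply_congr (b : ℕ → R) {u v : ℕ → R} {k : ℕ} (h : ∀ l ≤ k + 1, u l = v l) :
    jacobiOperator b u k = jacobiOperator b v k := by
  cases k with
  | zero => simp only [jacobiOperator_apply_zero, h 0 (by lia), h 1 (by lia)]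
  | succ k =>
    simp only [jacobiOperator_apply_succ, h k (by lia), h (k + 1) (by lia), h (k + 2) (by lia)]

lemma jacobiOperator_single_zero (b : ℕ → R) :
    jacobiOperator b (Pi.single 0 1) = prepend (b 0) (Pi.single 0 1) := by
  ext (_ | _ | k) <;> simp [jacobiOperator_apply_zero, jacobiOperator_apply_succ]

lemma jacobiOperator_prepend_zero (b v : ℕ → R) :
    jacobiOperator b (prepend 0 v) =
      prepend (v 0) (jacobiOperator (fun k => b (k + 1)) v) := by
  ext (_ | _ | k) <;> simp [jacobiOperator_apply_zero, jacobiOperator_apply_succ]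

/-- The discrete Lagrange identity: the Jacobi operator is symmetric up to a boundary term. -/
lemma sum_range_jacobiOperator_mul_sub (b u v : ℕ → R) (K : ℕ) :
    ∑ k ∈ range (K + 1), (jacobiOperator b u k * v k - u k * jacobiOperator b v k) =
      u (K + 1) * v K - u K * v (K + 1) := by
  induction K with
  | zero =>
    simp only [zero_add, sum_range_one, jacobiOperator_apply_zero]
    ring
  | succ K ih =>
    rw [sum_range_succ, ih, jacobiOperator_apply_succ, jacobiOperator_apply_succ]
    ring

lemma sum_range_jacobiOperator_mul (b v : ℕ → R) {u : ℕ → R} {K : ℕ} (hK : u K = 0)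
    (hK' : u (K + 1) = 0) :
    ∑ k ∈ range (K + 1), jacobiOperator b u k * v k =
      ∑ k ∈ range (K + 1), u k * jacobiOperator b v k := by
  rw [← sub_eq_zero, ← sum_sub_distrib, sum_range_jacobiOperator_mul_sub, hK, hK']
  ring

/-- The `n`-th row of the Stieltjes matrix with diagonal weights `b`: its `k`-th entry is the total
weight of the Motzkin prefixes of length `n` ending at height `k`. -/
def stieltjesRow (b : ℕ → R) (n : ℕ) : ℕ → R := (jacobiOperator b ^ n) (Pi.single 0 1)

@[simp]
lemma stieltjesRow_zero (b : ℕ → R) : stieltjesRow b 0 = Pi.single 0 1 := rfl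

lemma stieltjesRow_succ (b : ℕ → R) (n : ℕ) :
    stieltjesRow b (n + 1) = jacobiOperator b (stieltjesRow b n) := by
  rw [stieltjesRow, pow_succ', Module.End.mul_apply, stieltjesRow]

lemma stieltjesRow_of_lt (b : ℕ → R) {n k : ℕ} (h : n < k) : stieltjesRow b n k = 0 := by
  induction n generalizing k with
  | zero => simp [h.ne']
  | succ n ih =>
    obtain ⟨k, rfl⟩ := Nat.exists_eq_succ_of_ne_zero (Nat.ne_zero_of_lt h)
    rw [stieltjesRow_succ, jacobiOperator_apply_succ, ih (by lia), ih (by lia), ih (by lia)]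
    ring

lemma stieltjesRow_self (b : ℕ → R) (n : ℕ) : stieltjesRow b n n = 1 := by
  induction n with
  | zero => simp
  | succ n ih =>
    rw [stieltjesRow_succ, jacobiOperator_apply_succ, ih, stieltjesRow_of_lt b (by lia),
      stieltjesRow_of_lt b (by lia)]
    ring

lemma sum_range_stieltjesRow_mul (b : ℕ → R) {i K : ℕ} (j : ℕ) (h : i < K) :
    ∑ k ∈ range K, stieltjesRow b i k * stieltjesRow b j k = stieltjesRow b (i + j) 0 := by
  induction i generalizing j with
  | zero => simp [Pi.single_apply, h]
  | succ i ih =>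
    obtain ⟨K, rfl⟩ := Nat.exists_eq_succ_of_ne_zero (Nat.ne_zero_of_lt h)
    calc
      _ = ∑ k ∈ range (K + 1), jacobiOperator b (stieltjesRow b i) k * stieltjesRow b j k := by
        rw [stieltjesRow_succ]
      _ = ∑ k ∈ range (K + 1), stieltjesRow b i k * stieltjesRow b (j + 1) k := by
        rw [sum_range_jacobiOperator_mul b _ (stieltjesRow_of_lt b (by lia))
          (stieltjesRow_of_lt b (by lia)), stieltjesRow_succ b j]
      _ = stieltjesRow b (i + 1 + j) 0 := by
        rw [ih (j + 1) (by lia), add_right_comm, add_assoc]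

end JacobiOperator

section Hankel

variable {R : Type*} [CommRing R]

/-- The upper left `n × n` corner of the matrix of `jacobiOperator b`. -/
def jacobiMatrix (b : ℕ → R) (n : ℕ) : Matrix (Fin n) (Fin n) R :=
  of fun i j => jacobiOperator b (Pi.single (j : ℕ) 1) i

lemma jacobiMatrix_mulVec (b : ℕ → R) {v : ℕ → R} {n : ℕ} (hv : v n = 0) :
    (jacobiMatrix b n *ᵥ fun i => v i) = fun i : Fin n => jacobiOperator b v i := by
  ext i
  have htrunc : ∀ l ≤ (i : ℕ) + 1, v l = (∑ m ∈ range n, v m • Pi.single m (1 : R)) l := by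
    intro l hl
    obtain hl | rfl : l < n ∨ l = n := by lia
    · simp [Pi.single_apply, hl]
    · simp [Pi.single_apply, hv]
  rw [jacobiOperator_apply_congr b htrunc, map_sum, Finset.sum_apply, Finset.sum_range]
  simp [mulVec, dotProduct, jacobiMatrix, mul_comm]

/-- The sequence `b 0, m 0, m 1, …`, where `m n` is the total weight of the Motzkin paths of length
`n` whose level steps at height `k` have weight `b (k + 1)`. -/
def borderedMoment (b : ℕ → R) : ℕ → R :=
  prepend (b 0) fun n => stieltjesRow (fun k => b (k + 1)) n 0

/-- The rows of the block sum `1 ⊕ L`, where `L` is the Stieltjes matrix with diagonal weights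
`b 1, b 2, …`. -/
def borderedStieltjesRow (b : ℕ → R) : ℕ → ℕ → R :=
  prepend (Pi.single 0 1) fun n => prepend 0 (stieltjesRow (fun k => b (k + 1)) n)

lemma borderedStieltjesRow_of_lt (b : ℕ → R) {i k : ℕ} (h : i < k) :
    borderedStieltjesRow b i k = 0 := by
  obtain ⟨k, rfl⟩ := Nat.exists_eq_succ_of_ne_zero (Nat.ne_zero_of_lt h)
  cases i with
  | zero => simp [borderedStieltjesRow]
  | succ i => exact stieltjesRow_of_lt _ (by lia)

lemma borderedStieltjesRow_self (b : ℕ → R) (i : ℕ) : borderedStieltjesRow b i i = 1 := by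
  cases i with
  | zero => simp [borderedStieltjesRow]
  | succ i => exact stieltjesRow_self _ i

lemma jacobiOperator_borderedStieltjesRow (b : ℕ → R) (j : ℕ) :
    jacobiOperator b (borderedStieltjesRow b j) =
      prepend (borderedMoment b j) (stieltjesRow (fun k => b (k + 1)) j) := by
  cases j with
  | zero => exact jacobiOperator_single_zero b
  | succ j =>
    rw [stieltjesRow_succ]
    exact jacobiOperator_prepend_zero b _

lemma sum_range_borderedStieltjesRow_mul (b : ℕ → R) {i n : ℕ} (j : ℕ) (h : i < n) :
    ∑ k ∈ range n, borderedStieltjesRow b i k * jacobiOperator b (borderedStieltjesRow b j) k =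
      borderedMoment b (i + j) := by
  obtain ⟨n, rfl⟩ := Nat.exists_eq_succ_of_ne_zero (Nat.ne_zero_of_lt h)
  rw [jacobiOperator_borderedStieltjesRow, sum_range_succ']
  cases i with
  | zero => simp [borderedStieltjesRow]
  | succ i =>
    have hsum := sum_range_stieltjesRow_mul (fun k => b (k + 1)) j (by lia : i < n)
    simpa [borderedStieltjesRow, borderedMoment, Nat.add_right_comm i 1 j] using hsum

/-- The `n × n` Hankel matrix of a sequence. -/
def hankelMatrix (a : ℕ → R) (n : ℕ) : Matrix (Fin n) (Fin n) R := of fun i j => a (i + j)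

/-- The upper left `n × n` corner of the block sum `1 ⊕ L` of `borderedStieltjesRow`. -/
def borderedStieltjesMatrix (b : ℕ → R) (n : ℕ) : Matrix (Fin n) (Fin n) R :=
  of fun i j => borderedStieltjesRow b i j

lemma det_borderedStieltjesMatrix (b : ℕ → R) (n : ℕ) : (borderedStieltjesMatrix b n).det = 1 := by
  have htri : (borderedStieltjesMatrix b n).IsLowerTriangular :=
    fun _ _ hij => borderedStieltjesRow_of_lt b hij
  rw [det_of_isLowerTriangular _ htri]
  exact prod_eq_one fun i _ => borderedStieltjesRow_self b i

lemma hankelMatrix_borderedMoment (b : ℕ → R) (n : ℕ) :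
    hankelMatrix (borderedMoment b) n =
      borderedStieltjesMatrix b n * (jacobiMatrix b n * (borderedStieltjesMatrix b n)ᵀ) := by
  ext i j
  have hcol (k : Fin n) : (jacobiMatrix b n * (borderedStieltjesMatrix b n)ᵀ) k j =
      jacobiOperator b (borderedStieltjesRow b j) k :=
    congrFun (jacobiMatrix_mulVec b (borderedStieltjesRow_of_lt b j.isLt)) k
  calc
    hankelMatrix (borderedMoment b) n i j
      = ∑ k ∈ range n, borderedStieltjesRow b i k *
          jacobiOperator b (borderedStieltjesRow b j) k :=
        (sum_range_borderedStieltjesRow_mul b j i.isLt).symm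
    _ = ∑ k : Fin n, borderedStieltjesMatrix b n i k *
          (jacobiMatrix b n * (borderedStieltjesMatrix b n)ᵀ) k j := by
        simp only [hcol, Finset.sum_range]
        rfl
    _ = _ := (mul_apply ..).symm

theorem det_hankelMatrix_borderedMoment (b : ℕ → R) (n : ℕ) :
    (hankelMatrix (borderedMoment b) n).det = (jacobiMatrix b n).det := by
  rw [hankelMatrix_borderedMoment, det_mul, det_mul, det_transpose, det_borderedStieltjesMatrix,
    one_mul, mul_one]

lemma det_eq_of_row_zero_of_col_zero {n : ℕ} (A : Matrix (Fin (n + 2)) (Fin (n + 2)) R)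
    (hrow : ∀ j : Fin n, A 0 j.succ.succ = 0) (hcol : ∀ i : Fin n, A i.succ.succ 0 = 0) :
    A.det = A 0 0 * (A.submatrix Fin.succ Fin.succ).det -
      A 0 1 * A 1 0 * (A.submatrix (fun i => i.succ.succ) (fun i : Fin n => i.succ.succ)).det := by
  have hminor : (A.submatrix Fin.succ (Fin.succAbove 1)).det =
      A 1 0 * (A.submatrix (fun i => i.succ.succ) (fun i : Fin n => i.succ.succ)).det := by
    rw [det_succ_column_zero, Fin.sum_univ_succ, Finset.sum_eq_zero fun i _ => by simp [hcol]]
    simp [Function.comp_def]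
  rw [det_succ_row_zero, Fin.sum_univ_succ, Fin.sum_univ_succ,
    Finset.sum_eq_zero fun i _ => by simp [hrow], Fin.succ_zero_eq_one, hminor]
  simp only [Fin.val_zero, Fin.val_one, pow_zero, pow_one, Fin.succAbove_zero]
  ring

lemma jacobiMatrix_submatrix_succ (b : ℕ → R) (n : ℕ) :
    (jacobiMatrix b (n + 1)).submatrix Fin.succ Fin.succ =
      jacobiMatrix (fun k => b (k + 1)) n := by
  ext i j
  have hsingle : (Pi.single ((j : ℕ) + 1) 1 : ℕ → R) = prepend 0 (Pi.single (j : ℕ) 1) := by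
    ext (_ | k) <;> simp [Pi.single_apply]
  simp only [jacobiMatrix, submatrix_apply, of_apply, Fin.val_succ, hsingle,
    jacobiOperator_prepend_zero, prepend_succ]

lemma det_jacobiMatrix_add_two (b : ℕ → R) (n : ℕ) :
    (jacobiMatrix b (n + 2)).det =
      b 0 * (jacobiMatrix (fun k => b (k + 1)) (n + 1)).det -
        (jacobiMatrix (fun k => b (k + 2)) n).det := by
  have hminor : (jacobiMatrix b (n + 2)).submatrix (fun i => i.succ.succ)
      (fun i : Fin n => i.succ.succ) = jacobiMatrix (fun k => b (k + 2)) n := by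
    rw [← jacobiMatrix_submatrix_succ (fun k => b (k + 1)), ← jacobiMatrix_submatrix_succ b,
      submatrix_submatrix]
    rfl
  rw [det_eq_of_row_zero_of_col_zero _ (fun j => by simp [jacobiMatrix, jacobiOperator_apply_zero])
    (fun i => by simp [jacobiMatrix, jacobiOperator_apply_succ]),
    jacobiMatrix_submatrix_succ, hminor]
  simp [jacobiMatrix, jacobiOperator_apply_zero, jacobiOperator_apply_succ]

end Hankel

lemma periodic_six_of_add_two_eq_sub {G : Type*} [AddCommGroup G] {t : ℕ → G}
    (h : ∀ n, t (n + 2) = t (n + 1) - t n) : Function.Periodic t 6 := by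
  have hanti : Function.Antiperiodic t 3 := fun n => by
    rw [h (n + 1), h n, sub_sub_cancel_left]
  exact hanti.periodic_two_mul

lemma apply_succ_of_add_two_eq_sub {R : Type*} [Ring R] {t : ℕ → R} (hzero : t 0 = 1)
    (hone : t 1 = 1) (h : ∀ n, t (n + 2) = t (n + 1) - t n) (n : ℕ) :
    t (n + 1) = ![1, 0, -1, -1, 0, 1] ⟨n % 6, Nat.mod_lt _ (by norm_num)⟩ := by
  have hvalues (r : ℕ) (hr : r < 6) : t (r + 1) = ![1, 0, -1, -1, 0, 1] ⟨r, hr⟩ := by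
    interval_cases r <;> simp [h, hzero, hone]
  have hperiod : Function.Periodic (fun m => t (m + 1)) 6 :=
    periodic_six_of_add_two_eq_sub fun m => h (m + 1)
  rw [← hvalues]
  exact (hperiod.map_mod_nat n).symm

lemma ncard_latticePaths_even_eq_stieltjesRow (n k : ℕ) :
    ((latticePaths Even (2 * n + 1) (2 * k + 1)).ncard : ℤ) = stieltjesRow 1 n k := by
  induction n generalizing k with
  | zero =>
    rw [ncard_latticePaths_succ (by lia) (by lia), ncard_latticePaths_zero,
      ncard_latticePaths_zero, if_neg (by lia), stieltjesRow_zero, Pi.single_apply]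
    simp
  | succ n ih =>
    rw [mul_add_one, add_right_comm, ncard_latticePaths_even_add_two, stieltjesRow_succ,
      Nat.cast_add, Nat.cast_add, ih, ih]
    cases k with
    | zero =>
      rw [latticePaths_of_neg (by simp), jacobiOperator_apply_zero]
      simp [add_comm]
    | succ k =>
      have hdown : 2 * ((k + 1 : ℕ) : ℤ) - 1 = 2 * k + 1 := by push_cast; ring
      rw [hdown, ih, jacobiOperator_apply_succ]
      simp only [Pi.one_apply]
      ring

theorem dyckCount_even_eq_borderedMoment (n : ℕ) : (dyckCount Even n : ℤ) = borderedMoment 1 n := by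
  rw [dyckCount_eq_ncard_latticePaths]
  cases n with
  | zero => simp [ncard_latticePaths_zero, borderedMoment]
  | succ n =>
    rw [mul_add_one, ncard_latticePaths_succ le_rfl (by simp),
      latticePaths_of_neg (by simp : (0 - 1 : ℤ) < 0), Set.ncard_empty, add_zero]
    have hmotzkin := ncard_latticePaths_even_eq_stieltjesRow n 0
    rw [Nat.cast_zero, mul_zero] at hmotzkin
    exact hmotzkin

theorem det_jacobiMatrix_one_succ {R : Type*} [CommRing R] (n : ℕ) :
    (jacobiMatrix (1 : ℕ → R) (n + 1)).det =
      ![1, 0, -1, -1, 0, 1] ⟨n % 6, Nat.mod_lt _ (by norm_num)⟩ := by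
  refine apply_succ_of_add_two_eq_sub (t := fun m => (jacobiMatrix (1 : ℕ → R) m).det)
    det_fin_zero ?_ (fun m => ?_) n
  · simp [jacobiMatrix, jacobiOperator_apply_zero]
  · exact (det_jacobiMatrix_add_two 1 m).trans (by rw [Pi.one_apply, one_mul]; rfl)

/-- The sequence of Hankel determinants of the counting sequence of Dyck paths
with all peaks at odd heights (i.e. avoiding even peak heights) is the periodic
sequence `(1, 0, -1, -1, 0, 1)^*`, where the `n`-th entry (for `n ≥ 1`) is the
determinant of the `n × n` matrix with `(i,j)` entry `d_{i+j}`. -/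
theorem stmt9 (n : ℕ) :
    Matrix.det (Matrix.of fun i j : Fin (n + 1) =>
        (dyckCount (fun k => Even k) ((i : ℕ) + (j : ℕ)) : ℤ))
      = ![1, 0, -1, -1, 0, 1] ⟨n % 6, Nat.mod_lt _ (by norm_num)⟩ := by
  simp only [dyckCount_even_eq_borderedMoment]
  exact (det_hankelMatrix_borderedMoment 1 (n + 1)).trans (det_jacobiMatrix_one_succ n)
end

section
/- Let D₁, D₂, D₃ be the generating functions for Dyck paths with peak heights avoiding the residue classes 1, 2, 3 modulo 3 respectively. Then D₂(x) = x + D₁(x). -/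
open PowerSeries

/-! Clearing denominators in a continued fraction of period three with weights `a`, `b`, `c` leaves
a quadratic equation for its value. The equation for `D₁` becomes the one for `D₂` after the
translation by `X`, and that equation has only one power series solution: its leading coefficient
vanishes at `0` while its linear coefficient does not. -/

theorem eq_of_mul_sq_add_eq_mul {R : Type*} [CommRing R] {a b c f g : R⟦X⟧}
    (ha : constantCoeff a = 0) (hb : IsUnit (constantCoeff b))
    (hf : a * f ^ 2 + c = b * f) (hg : a * g ^ 2 + c = b * g) : f = g := by
  have hunit : IsUnit (b - a * (f + g)) := by
    simpa [isUnit_iff_constantCoeff, ha] using hb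
  have hprod : (b - a * (f + g)) * f = (b - a * (f + g)) * g := by
    linear_combination hg - hf
  exact hunit.mul_left_cancel hprod

section ContinuedFraction

variable {k : Type*} [Field k]

-- If `g = p / q`, one more level of the fraction is `q / (q * w - X * p)`: the levels act linearly
-- on the pair `(p, q)`, so denominators can be cleared from the inside out.
theorem sub_X_mul_mul_inv_sub_X_mul {w p q g : k⟦X⟧} (hw : constantCoeff w ≠ 0) (hg : q * g = p) :
    (q * w - X * p) * (w - X * g)⁻¹ = q := by
  have hcancel : (w - X * g) * (w - X * g)⁻¹ = 1 :=
    PowerSeries.mul_inv_cancel _ (by simpa using hw)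
  calc
    (q * w - X * p) * (w - X * g)⁻¹ = q * ((w - X * g) * (w - X * g)⁻¹) := by rw [← hg]; ring
    _ = q := by rw [hcancel, mul_one]

theorem quadratic_of_eq_periodThree_continuedFraction {a b c f : k⟦X⟧} (ha : constantCoeff a ≠ 0)
    (hb : constantCoeff b ≠ 0) (hc : constantCoeff c ≠ 0)
    (hf : f = (a - X * (b - X * (c - X * f)⁻¹)⁻¹)⁻¹) :
    X * (a * b - X) * f ^ 2 + (b * c - X) = (a * b * c - X * (a - b + c)) * f := by
  have inner := sub_X_mul_mul_inv_sub_X_mul hc (one_mul f)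
  have middle := sub_X_mul_mul_inv_sub_X_mul hb inner
  have outer := sub_X_mul_mul_inv_sub_X_mul ha middle
  rw [← hf] at outer
  linear_combination -outer

end ContinuedFraction

theorem stmt11_general {k : Type*} [Field k] (D₁ D₂ : k⟦X⟧)
    (h₁ : D₁ = (1 + X - X * (1 - X * (1 - X * D₁)⁻¹)⁻¹)⁻¹)
    (h₂ : D₂ = (1 - X * (1 + X - X * (1 - X * D₂)⁻¹)⁻¹)⁻¹) :
    D₂ = X + D₁ := by
  have hD₁ : X * D₁ ^ 2 + (1 - X) = (1 - X ^ 2) * D₁ := by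
    linear_combination
      quadratic_of_eq_periodThree_continuedFraction (by simp) (by simp) (by simp) h₁
  have hD₂ : X * D₂ ^ 2 + 1 = (1 + X ^ 2) * D₂ := by
    linear_combination
      quadratic_of_eq_periodThree_continuedFraction (by simp) (by simp) (by simp) h₂
  have hX_add_D₁ : X * (X + D₁) ^ 2 + 1 = (1 + X ^ 2) * (X + D₁) := by
    linear_combination hD₁
  exact eq_of_mul_sq_add_eq_mul (by simp) (by simp) hD₂ hX_add_D₁

/-- Let `D₁, D₂, D₃` be the generating functions for Dyck paths with peak heights
avoiding the congruence classes of `1`, `2`, `3` modulo `3`, respectively, given by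
their continued-fraction functional equations.  Then `D₂(x) = x + D₁(x)`. -/
theorem stmt11 (D₁ D₂ D₃ : PowerSeries ℚ)
    (h₁ : D₁ = (1 + PowerSeries.X - PowerSeries.X *
        (1 - PowerSeries.X * (1 - PowerSeries.X * D₁)⁻¹)⁻¹)⁻¹)
    (h₂ : D₂ = (1 - PowerSeries.X * (1 + PowerSeries.X - PowerSeries.X *
        (1 - PowerSeries.X * D₂)⁻¹)⁻¹)⁻¹)
    (h₃ : D₃ = (1 - PowerSeries.X * (1 - PowerSeries.X * (1 + PowerSeries.X -
        PowerSeries.X * D₃)⁻¹)⁻¹)⁻¹) :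
    D₂ = PowerSeries.X + D₁ :=
  stmt11_general D₁ D₂ h₁ h₂
end
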